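/- The function C is strictly decreasing on the real line: for all real R₁ < R₂, C(R₁) > C(R₂). -/

import Mathlib

/-!
Put `x = -R` and write `F = erfc`, `g = exp (-x ^ 2) / √π`, and `I₁`, `I₂` for the first two
iterated tail integrals of `F`. Then `F' = -2 g`, `I₁' = -F`, `I₂' = -I₁`, all of these functions
vanish at `+∞`, and `D (-x) = 4 I₂ - I₁ ^ 2`, so that `C (-x) = F / (4 I₂ - I₁ ^ 2)`.

Since `(4 I₂ - I₁ ^ 2)' = -2 I₁ F(-x)`, the monotone form of l'Hôpital's rule at `+∞` reduces the
claim to `I₁ F(-x) / g` being strictly decreasing, which upon differentiation reads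
`g I₁ < 2 I₂ F(-x)`. The difference of the two sides is even in `x`, so let `0 ≤ x`; then
`1 ≤ F(-x)` and `g I₁ < 2 I₂` suffices. This follows from the Turán-type inequality
`I₁ ^ 2 < 2 I₂ F` (the difference of its sides has derivative `-4 g I₂ < 0` and limit `0`) when
`g F ≤ I₁`, and from the elementary bound `2 g (x + g) < 1` when `I₁ < g F`.
-/

open MeasureTheory Filter

/-- The complementary error function. -/
noncomputable def erfc (x : ℝ) : ℝ :=
  2 / Real.sqrt Real.pi * ∫ t in Set.Ioi x, Real.exp (-t ^ 2)

/-- The denominator of the explosion-rate bound. -/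
noncomputable def D (R : ℝ) : ℝ :=
  (1 + 2 * R ^ 2) * erfc (-R) + 2 * R * Real.exp (-R ^ 2) / Real.sqrt Real.pi -
    (R * erfc (-R) + Real.exp (-R ^ 2) / Real.sqrt Real.pi) ^ 2

/-- The explosion-rate bound. -/
noncomputable def C (R : ℝ) : ℝ := erfc (-R) / D R

open Set Topology

section Calculus

variable {f f' g g' : ℝ → ℝ} {a l : ℝ}

lemma lt_of_hasDerivAt_neg_of_tendsto_atTop (hf : ∀ x ∈ Ici a, HasDerivAt f (f' x) x)
    (hf' : ∀ x ∈ Ioi a, f' x < 0) (hlim : Tendsto f atTop (𝓝 l)) : l < f a := by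
  have hanti : StrictAntiOn f (Ici a) := by
    refine strictAntiOn_of_hasDerivWithinAt_neg (f' := f') (convex_Ici a)
      (fun x hx => (hf x hx).continuousAt.continuousWithinAt) ?_ ?_ <;> rw [interior_Ici]
    exacts [fun x hx => (hf x (Ioi_subset_Ici_self hx)).hasDerivWithinAt, hf']
  have hmem : a + 1 ∈ Ici a := by simp
  calc
    l ≤ f (a + 1) := le_of_tendsto hlim <| (eventually_ge_atTop (a + 1)).mono fun x hx =>
      hanti.antitoneOn hmem (hmem.trans hx) hx
    _ < f a := hanti self_mem_Ici hmem (by simp)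

lemma lt_of_hasDerivAt_lt_of_tendsto_atTop (hf : ∀ x ∈ Ici a, HasDerivAt f (f' x) x)
    (hg : ∀ x ∈ Ici a, HasDerivAt g (g' x) x) (hlt : ∀ x ∈ Ioi a, g' x < f' x)
    (hf_lim : Tendsto f atTop (𝓝 l)) (hg_lim : Tendsto g atTop (𝓝 l)) : f a < g a :=
  sub_pos.1 <| lt_of_hasDerivAt_neg_of_tendsto_atTop (f := fun x => g x - f x)
    (fun x hx => (hg x hx).fun_sub (hf x hx)) (fun x hx => sub_neg_of_lt (hlt x hx))
    (by simpa using hg_lim.sub hf_lim)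

lemma strictAnti_div_of_strictAnti_deriv_div (hf : ∀ x, HasDerivAt f (f' x) x)
    (hg : ∀ x, HasDerivAt g (g' x) x) (hg' : ∀ x, g' x < 0) (hf_lim : Tendsto f atTop (𝓝 0))
    (hg_lim : Tendsto g atTop (𝓝 0)) (hanti : StrictAnti fun x => f' x / g' x) :
    StrictAnti fun x => f x / g x := by
  have hg_pos (x : ℝ) : 0 < g x :=
    lt_of_hasDerivAt_neg_of_tendsto_atTop (fun y _ => hg y) (fun y _ => hg' y) hg_lim
  have hlt (x : ℝ) : f x < f' x / g' x * g x := by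
    refine lt_of_hasDerivAt_lt_of_tendsto_atTop (g := fun y => f' x / g' x * g y)
      (fun y _ => hf y) (fun y _ => (hg y).const_mul _) (fun y hxy => ?_) hf_lim
      (by simpa using hg_lim.const_mul (f' x / g' x))
    rw [← div_lt_iff_of_neg (hg' y)]
    exact hanti hxy
  refine strictAnti_of_hasDerivAt_neg (fun x => (hf x).div (hg x) (hg_pos x).ne') fun x => ?_
  have hnum : f' x * g x - f x * g' x = g' x * (f' x / g' x * g x - f x) := by
    have := (hg' x).ne
    field_simp
  rw [hnum]
  exact div_neg_of_neg_of_pos (mul_neg_of_neg_of_pos (hg' x) (sub_pos.2 (hlt x)))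
    (pow_pos (hg_pos x) 2)

end Calculus

lemma hasDerivAt_integral_Ioi {E : Type*} [NormedAddCommGroup E] [NormedSpace ℝ E]
    [CompleteSpace E] {f : ℝ → E} (hf : Integrable f) (hcont : Continuous f) (x : ℝ) :
    HasDerivAt (fun y => ∫ t in Ioi y, f t) (-f x) x := by
  have hsplit (y : ℝ) : ∫ t in Ioi y, f t = (∫ t in Ioi x, f t) - ∫ t in x..y, f t := by
    rw [← intervalIntegral.integral_Ioi_sub_Ioi' hf.integrableOn hf.integrableOn, sub_sub_cancel]
  rw [funext hsplit]
  exact (hcont.integral_hasStrictDerivAt x x).hasDerivAt.const_sub _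

section Gauss

/-- The Gaussian density `exp (-x ^ 2) / √π`, half the negative derivative of `erfc`. -/
noncomputable def gauss (x : ℝ) : ℝ := Real.exp (-x ^ 2) / √Real.pi

lemma gauss_pos (x : ℝ) : 0 < gauss x := by
  unfold gauss
  positivity

lemma gauss_neg (x : ℝ) : gauss (-x) = gauss x := by
  simp only [gauss, neg_sq]

lemma hasDerivAt_gauss (x : ℝ) : HasDerivAt gauss (-2 * x * gauss x) x := by
  refine ((hasDerivAt_pow 2 x).fun_neg.exp.div_const √Real.pi).congr_deriv ?_
  simp only [gauss]
  ring

lemma tendsto_pow_mul_gauss (n : ℕ) : Tendsto (fun x => x ^ n * gauss x) atTop (𝓝 0) := by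
  have hexp : Tendsto (fun x : ℝ => x ^ n * Real.exp (-x) / √Real.pi) atTop (𝓝 0) := by
    simpa using (Real.tendsto_pow_mul_exp_neg_atTop_nhds_zero n).div_const √Real.pi
  refine squeeze_zero' ?_ ?_ hexp
  · filter_upwards [eventually_ge_atTop 0] with x hx
    exact mul_nonneg (pow_nonneg hx n) (gauss_pos x).le
  · filter_upwards [eventually_ge_atTop 1] with x hx
    rw [gauss, ← mul_div_assoc]
    gcongr
    exact le_self_pow₀ hx two_ne_zero

lemma tendsto_gauss : Tendsto gauss atTop (𝓝 0) := by
  simpa using tendsto_pow_mul_gauss 0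

lemma two_mul_gauss_mul_add_gauss_lt_one (x : ℝ) : 2 * gauss x * (x + gauss x) < 1 := by
  have hs : 0 < √Real.pi := by positivity
  have hs_sq : 3 < √Real.pi ^ 2 := by simpa [Real.sq_sqrt Real.pi_nonneg] using Real.pi_gt_three
  have hg := gauss_pos x
  have hexp : √Real.pi * gauss x * (1 + x ^ 2) ≤ 1 := by
    have hg_eq : √Real.pi * gauss x = (Real.exp (x ^ 2))⁻¹ := by
      rw [gauss, mul_div_cancel₀ _ hs.ne', Real.exp_neg]
    rw [hg_eq, inv_mul_le_one₀ (Real.exp_pos _), add_comm]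
    exact Real.add_one_le_exp _
  have hgs : √Real.pi * gauss x ≤ 1 := by nlinarith [mul_pos hs hg, sq_nonneg x]
  have hamgm : 2 * √Real.pi * x ≤ √Real.pi ^ 2 * x ^ 2 + 1 := by
    linarith [sq_nonneg (√Real.pi * x - 1)]
  refine lt_of_mul_lt_mul_left ?_ hs.le
  calc
    √Real.pi * (2 * gauss x * (x + gauss x))
        = 2 * √Real.pi * x * gauss x + 2 * (√Real.pi * gauss x) * gauss x := by ring
    _ ≤ (√Real.pi ^ 2 * x ^ 2 + 1) * gauss x + 2 * 1 * gauss x := by gcongr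
    _ = √Real.pi * (√Real.pi * gauss x * (1 + x ^ 2)) - (√Real.pi ^ 2 - 3) * gauss x := by ring
    _ < √Real.pi * (√Real.pi * gauss x * (1 + x ^ 2)) :=
      sub_lt_self _ (mul_pos (sub_pos.2 hs_sq) hg)
    _ ≤ √Real.pi * 1 := by gcongr

end Gauss

section Erfc

lemma integrable_exp_neg_sq : Integrable fun t : ℝ => Real.exp (-t ^ 2) := by
  simpa using integrable_exp_neg_mul_sq one_pos

lemma hasDerivAt_erfc (x : ℝ) : HasDerivAt erfc (-2 * gauss x) x := by
  refine ((hasDerivAt_integral_Ioi integrable_exp_neg_sq (by fun_prop) x).const_mul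
    (2 / √Real.pi)).congr_deriv ?_
  simp only [gauss]
  ring

lemma tendsto_erfc : Tendsto erfc atTop (𝓝 0) := by
  rw [← mul_zero (2 / √Real.pi)]
  exact (tendsto_integral_Ioi_zero tendsto_id).const_mul _

lemma erfc_pos (x : ℝ) : 0 < erfc x :=
  lt_of_hasDerivAt_neg_of_tendsto_atTop (fun y _ => hasDerivAt_erfc y)
    (fun y _ => by linarith [gauss_pos y]) tendsto_erfc

lemma erfc_strictAnti : StrictAnti erfc :=
  strictAnti_of_hasDerivAt_neg hasDerivAt_erfc fun x => by linarith [gauss_pos x]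

lemma erfc_add_erfc_neg (x : ℝ) : erfc x + erfc (-x) = 2 := by
  have hreflect : ∫ t in Ioi (-x), Real.exp (-t ^ 2) = ∫ t in Iic x, Real.exp (-t ^ 2) := by
    rw [← neg_neg x, ← integral_comp_neg_Ioi]
    simp only [neg_neg, neg_sq]
  have htotal : ∫ t : ℝ, Real.exp (-t ^ 2) = √Real.pi := by simpa using integral_gaussian 1
  rw [erfc, erfc, hreflect, ← mul_add, add_comm, intervalIntegral.integral_Iic_add_Ioi
    integrable_exp_neg_sq.integrableOn integrable_exp_neg_sq.integrableOn, htotal,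
    div_mul_cancel₀ _ (by positivity)]

lemma one_le_erfc_neg {x : ℝ} (hx : 0 ≤ x) : 1 ≤ erfc (-x) := by
  linarith [erfc_strictAnti.antitone (neg_le_self hx), erfc_add_erfc_neg x]

lemma hasDerivAt_erfc_neg (x : ℝ) : HasDerivAt (fun y => erfc (-y)) (2 * gauss x) x := by
  refine ((hasDerivAt_erfc (-x)).comp x (hasDerivAt_neg x)).congr_deriv ?_
  rw [gauss_neg]
  ring

lemma erfc_lt_gauss {x : ℝ} (hx : 1 ≤ x) : erfc x < gauss x := by
  refine lt_of_hasDerivAt_lt_of_tendsto_atTop (fun y _ => hasDerivAt_erfc y)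
    (fun y _ => hasDerivAt_gauss y) (fun y hy => ?_) tendsto_erfc tendsto_gauss
  nlinarith [gauss_pos y, hx.trans_lt (mem_Ioi.1 hy)]

lemma tendsto_pow_mul_erfc (n : ℕ) : Tendsto (fun x => x ^ n * erfc x) atTop (𝓝 0) := by
  refine squeeze_zero' ?_ ?_ (tendsto_pow_mul_gauss n)
  · filter_upwards [eventually_ge_atTop 0] with x hx
    exact mul_nonneg (pow_nonneg hx n) (erfc_pos x).le
  · filter_upwards [eventually_ge_atTop 1] with x hx
    exact mul_le_mul_of_nonneg_left (erfc_lt_gauss hx).le (by positivity)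

end Erfc

section IteratedErfc

/-- The first iterated integral `∫ t in Ioi x, erfc t` of the complementary error function, in
closed form. -/
noncomputable def ierfc (x : ℝ) : ℝ := gauss x - x * erfc x

/-- The second iterated integral `∫ t in Ioi x, ierfc t` of the complementary error function, in
closed form. -/
noncomputable def i2erfc (x : ℝ) : ℝ := (erfc x - 2 * x * ierfc x) / 4

lemma hasDerivAt_ierfc (x : ℝ) : HasDerivAt ierfc (-erfc x) x := by
  refine ((hasDerivAt_gauss x).sub ((hasDerivAt_id' x).mul (hasDerivAt_erfc x))).congr_deriv ?_
  ring

lemma hasDerivAt_i2erfc (x : ℝ) : HasDerivAt i2erfc (-ierfc x) x := by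
  refine (((hasDerivAt_erfc x).sub (((hasDerivAt_id' x).const_mul 2).mul
    (hasDerivAt_ierfc x))).div_const 4).congr_deriv ?_
  simp only [ierfc]
  ring

lemma tendsto_ierfc : Tendsto ierfc atTop (𝓝 0) := by
  change Tendsto (fun x => gauss x - x * erfc x) atTop (𝓝 0)
  simpa using tendsto_gauss.sub (tendsto_pow_mul_erfc 1)

lemma tendsto_i2erfc : Tendsto i2erfc atTop (𝓝 0) := by
  have hmul : Tendsto (fun x => x * ierfc x) atTop (𝓝 0) := by
    have hexpand (x : ℝ) : x * ierfc x = x ^ 1 * gauss x - x ^ 2 * erfc x := by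
      rw [ierfc]
      ring
    simpa only [hexpand, sub_zero] using (tendsto_pow_mul_gauss 1).sub (tendsto_pow_mul_erfc 2)
  change Tendsto (fun x => (erfc x - 2 * x * ierfc x) / 4) atTop (𝓝 0)
  simpa [mul_assoc] using (tendsto_erfc.sub (hmul.const_mul 2)).div_const 4

lemma ierfc_pos (x : ℝ) : 0 < ierfc x :=
  lt_of_hasDerivAt_neg_of_tendsto_atTop (fun y _ => hasDerivAt_ierfc y)
    (fun y _ => neg_neg_of_pos (erfc_pos y)) tendsto_ierfc

lemma i2erfc_pos (x : ℝ) : 0 < i2erfc x :=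
  lt_of_hasDerivAt_neg_of_tendsto_atTop (fun y _ => hasDerivAt_i2erfc y)
    (fun y _ => neg_neg_of_pos (ierfc_pos y)) tendsto_i2erfc

lemma ierfc_sq_lt_two_mul_i2erfc_mul_erfc (x : ℝ) : ierfc x ^ 2 < 2 * i2erfc x * erfc x := by
  refine lt_of_hasDerivAt_lt_of_tendsto_atTop (f := fun y => ierfc y ^ 2)
    (g := fun y => 2 * i2erfc y * erfc y) (fun y _ => (hasDerivAt_ierfc y).fun_pow 2)
    (fun y _ => ((hasDerivAt_i2erfc y).const_mul 2).fun_mul (hasDerivAt_erfc y)) (fun y _ => ?_)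
    (by simpa using tendsto_ierfc.pow 2)
    (by simpa using (tendsto_i2erfc.const_mul 2).mul tendsto_erfc)
  push_cast
  linarith [mul_pos (i2erfc_pos y) (gauss_pos y)]

lemma gauss_mul_ierfc_lt_two_mul_i2erfc {x : ℝ} (hx : 0 ≤ x) :
    gauss x * ierfc x < 2 * i2erfc x := by
  have hF := erfc_pos x
  have hM := ierfc_pos x
  rcases le_or_gt (gauss x * erfc x) (ierfc x) with hge | hlt
  · refine lt_of_mul_lt_mul_right ?_ hF.le
    calc
      gauss x * ierfc x * erfc x = gauss x * erfc x * ierfc x := by ring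
      _ ≤ ierfc x ^ 2 := by rw [sq]; gcongr
      _ < 2 * i2erfc x * erfc x := ierfc_sq_lt_two_mul_i2erfc_mul_erfc x
  · have hxg : 0 < x + gauss x := add_pos_of_nonneg_of_pos hx (gauss_pos x)
    have : 2 * (x + gauss x) * ierfc x < erfc x := by
      calc
        2 * (x + gauss x) * ierfc x < 2 * (x + gauss x) * (gauss x * erfc x) := by gcongr
        _ = 2 * gauss x * (x + gauss x) * erfc x := by ring
        _ < erfc x := mul_lt_of_lt_one_left hF (two_mul_gauss_mul_add_gauss_lt_one x)
    rw [i2erfc]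
    linarith

lemma gauss_mul_ierfc_lt_two_mul_i2erfc_mul_erfc_neg (x : ℝ) :
    gauss x * ierfc x < 2 * i2erfc x * erfc (-x) := by
  have hnonneg {y : ℝ} (hy : 0 ≤ y) : gauss y * ierfc y < 2 * i2erfc y * erfc (-y) :=
    (gauss_mul_ierfc_lt_two_mul_i2erfc hy).trans_le <|
      le_mul_of_one_le_right (by linarith [i2erfc_pos y]) (one_le_erfc_neg hy)
  rcases le_total 0 x with hx | hx
  · exact hnonneg hx
  · have heven : 2 * i2erfc (-x) * erfc (- -x) - gauss (-x) * ierfc (-x) =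
        2 * i2erfc x * erfc (-x) - gauss x * ierfc x := by
      simp only [i2erfc, ierfc, gauss_neg, neg_neg]
      ring
    rw [← sub_pos, ← heven, sub_pos]
    exact hnonneg (neg_nonneg.2 hx)

lemma strictAnti_ierfc_mul_erfc_neg_div_gauss :
    StrictAnti fun x => ierfc x * erfc (-x) / gauss x := by
  have hderiv (x : ℝ) : HasDerivAt (fun y => ierfc y * erfc (-y) / gauss y)
      (2 * (gauss x * ierfc x - 2 * i2erfc x * erfc (-x)) / gauss x) x := by
    have hg := (gauss_pos x).ne'
    refine (((hasDerivAt_ierfc x).mul (hasDerivAt_erfc_neg x)).div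
      (hasDerivAt_gauss x) hg).congr_deriv ?_
    simp only [Pi.mul_apply, i2erfc]
    field_simp
    ring
  refine strictAnti_of_hasDerivAt_neg hderiv fun x => div_neg_of_neg_of_pos ?_ (gauss_pos x)
  linarith [gauss_mul_ierfc_lt_two_mul_i2erfc_mul_erfc_neg x]

end IteratedErfc

section ExplosionRate

lemma D_neg (x : ℝ) : D (-x) = 4 * i2erfc x - ierfc x ^ 2 := by
  simp only [D, i2erfc, ierfc, gauss, neg_neg, neg_sq]
  ring

lemma hasDerivAt_D_neg (x : ℝ) :
    HasDerivAt (fun y => D (-y)) (-2 * (ierfc x * erfc (-x))) x := by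
  rw [funext D_neg]
  refine (((hasDerivAt_i2erfc x).const_mul 4).sub ((hasDerivAt_ierfc x).pow 2)).congr_deriv ?_
  rw [eq_sub_of_add_eq' (erfc_add_erfc_neg x)]
  push_cast
  ring

lemma tendsto_D_neg : Tendsto (fun x => D (-x)) atTop (𝓝 0) := by
  simpa [D_neg] using (tendsto_i2erfc.const_mul 4).sub (tendsto_ierfc.pow 2)

lemma D_pos (R : ℝ) : 0 < D R := by
  have hneg (x : ℝ) : -2 * (ierfc x * erfc (-x)) < 0 := by
    linarith [mul_pos (ierfc_pos x) (erfc_pos (-x))]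
  simpa using lt_of_hasDerivAt_neg_of_tendsto_atTop (a := -R) (fun x _ => hasDerivAt_D_neg x)
    (fun x _ => hneg x) tendsto_D_neg

lemma strictAnti_D_neg_div_erfc : StrictAnti fun x => D (-x) / erfc x := by
  refine strictAnti_div_of_strictAnti_deriv_div hasDerivAt_D_neg hasDerivAt_erfc
    (fun x => by linarith [gauss_pos x]) tendsto_D_neg tendsto_erfc ?_
  simpa only [mul_div_mul_left _ _ (by norm_num : (-2 : ℝ) ≠ 0)] using
    strictAnti_ierfc_mul_erfc_neg_div_gauss

end ExplosionRate

theorem C_strictAnti : ∀ R₁ R₂ : ℝ, R₁ < R₂ → C R₂ < C R₁ := by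
  intro R₁ R₂ hR
  have hlt : D R₁ / erfc (-R₁) < D R₂ / erfc (-R₂) := by
    simpa using strictAnti_D_neg_div_erfc (neg_lt_neg hR)
  have hpos : 0 < D R₁ / erfc (-R₁) := div_pos (D_pos R₁) (erfc_pos _)
  simpa [C] using inv_strictAnti₀ hpos hlt
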